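/- (Theorem 1) Let P ∈ R^{n×n} be symmetric, X ∈ R^{n×d}, E = P − X X^T, ε = ‖E‖_F > 0. Let o = min(rank(X), k), let U_o ∈ R^{n×o} be the left singular vectors of X associated with its o largest singular values, Q = U_o U_o^T − (1/2) I_n, s = ⟨E Q, Q E⟩_F/‖E Q‖_F², δ = 1 − sqrt((1+s)/2), σ_o the o-th largest singular value of X, and σ* the (o+1)-th largest singular value of X (σ* = 0 if rank(X) ≤ o). Assume E Q ≠ Q E (so δ > 0). If sqrt(o)·ε/σ_o² ≤ δ/2 and sqrt(n−o)·σ*² ≤ δε/2, then there exists W ∈ R^{d×k} such that, with H = P X W, ‖P − H H^T‖_F ≤ ε. That is, H H^T approximates P at least as well as X X^T does. -/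

import Mathlib

open Matrix

/-- Frobenius norm of a real matrix: ‖M‖_F = sqrt(tr(Mᵀ M)). -/
noncomputable def frobNorm {m n : Type*} [Fintype m] [Fintype n]
    (M : Matrix m n ℝ) : ℝ :=
  Real.sqrt ((Mᵀ * M).trace)

/-- Frobenius inner product of real matrices: ⟨M, N⟩_F = tr(Mᵀ N). -/
noncomputable def frobInner {m n : Type*} [Fintype m] [Fintype n]
    (M N : Matrix m n ℝ) : ℝ :=
  (Mᵀ * N).trace

/-!
Write `X Xᵀ = Uₒ Σₒ² Uₒᵀ + T`, where `T` is the contribution of the trailing singular triples. The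
weight `W = Vₒ Σₒ⁻²`, padded with zero columns, gives `H = Uₒ Σₒ + E Uₒ Σₒ⁻¹`, and expanding yields
`P - H Hᵀ = T - (E Q + Q E) - E (Uₒ Σₒ⁻² Uₒᵀ) E`.
Since `2 Q` is a reflection, `E Q` and `Q E` both have norm `ε / 2`, and `s` is the cosine of the
angle between them; hence `‖E Q + Q E‖ = (1 - δ) ε`. The two spectral assumptions bound each of the
other two terms by `δ ε / 2`.
-/

section Frobenius

variable {l m n : Type*} [Fintype l] [Fintype m] [Fintype n]

lemma frobInner_self_nonneg (M : Matrix m n ℝ) : 0 ≤ frobInner M M := by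
  simpa only [frobInner, conjTranspose_eq_transpose_of_trivial] using
    (posSemidef_conjTranspose_mul_self M).trace_nonneg

lemma frobInner_comm (M N : Matrix m n ℝ) : frobInner M N = frobInner N M := by
  rw [frobInner, ← trace_transpose, transpose_mul, transpose_transpose, frobInner]

lemma frobNorm_nonneg (M : Matrix m n ℝ) : 0 ≤ frobNorm M :=
  Real.sqrt_nonneg _

lemma frobNorm_sq (M : Matrix m n ℝ) : frobNorm M ^ 2 = frobInner M M :=
  Real.sq_sqrt (frobInner_self_nonneg M)

lemma frobNorm_add_sq (M N : Matrix m n ℝ) :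
    frobNorm (M + N) ^ 2 = frobNorm M ^ 2 + 2 * frobInner M N + frobNorm N ^ 2 := by
  have expand : frobInner (M + N) (M + N)
      = frobInner M M + frobInner M N + (frobInner N M + frobInner N N) := by
    simp only [frobInner, transpose_add, Matrix.add_mul, Matrix.mul_add, trace_add]
    ring
  rw [frobNorm_sq, frobNorm_sq, frobNorm_sq, expand, frobInner_comm N M]
  ring

-- The half-angle formula: the quotient is the cosine of the angle between `M` and `N`.
lemma frobNorm_add_of_frobNorm_eq {M N : Matrix m n ℝ} (hM : 0 < frobNorm M)
    (hMN : frobNorm M = frobNorm N) :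
    frobNorm (M + N) = 2 * frobNorm M * √((1 + frobInner M N / frobNorm M ^ 2) / 2) := by
  have sq_eq : frobNorm (M + N) ^ 2
      = (2 * frobNorm M) ^ 2 * ((1 + frobInner M N / frobNorm M ^ 2) / 2) := by
    rw [frobNorm_add_sq, ← hMN]
    field_simp
    ring
  rw [← Real.sqrt_sq (frobNorm_nonneg (M + N)), sq_eq, Real.sqrt_mul (sq_nonneg _),
    Real.sqrt_sq (by positivity)]

lemma frobNorm_diagonal_le [DecidableEq n] {a : n → ℝ} {c : ℝ} (hc : 0 ≤ c)
    (ha : ∀ i, |a i| ≤ c) : frobNorm (diagonal a) ≤ √(Fintype.card n) * c := by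
  have trace_le : ((diagonal a)ᵀ * diagonal a).trace ≤ Fintype.card n * c ^ 2 := by
    rw [diagonal_transpose, diagonal_mul_diagonal, trace_diagonal, ← nsmul_eq_mul]
    exact Finset.sum_le_card_nsmul _ _ _ fun i _ => by
      simpa only [sq] using sq_le_sq' (abs_le.1 (ha i)).1 (abs_le.1 (ha i)).2
  calc frobNorm (diagonal a) ≤ √(Fintype.card n * c ^ 2) := Real.sqrt_le_sqrt trace_le
    _ = √(Fintype.card n) * c := by rw [Real.sqrt_mul (Nat.cast_nonneg _), Real.sqrt_sq hc]

section MathlibNorm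

attribute [local instance] Matrix.frobeniusNormedAddCommGroup

lemma frobNorm_eq_norm (M : Matrix m n ℝ) : frobNorm M = ‖M‖ := by
  rw [frobNorm, frobenius_norm_def, ← Real.sqrt_eq_rpow]
  simp only [trace, diag_apply, mul_apply, transpose_apply, Real.rpow_two, Real.norm_eq_abs, sq_abs,
    ← sq]
  rw [Finset.sum_comm]

lemma frobNorm_transpose (M : Matrix m n ℝ) : frobNorm Mᵀ = frobNorm M := by
  simpa only [frobNorm_eq_norm] using frobenius_norm_transpose M

lemma frobNorm_sub_le (M N : Matrix m n ℝ) : frobNorm (M - N) ≤ frobNorm M + frobNorm N := by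
  simpa only [frobNorm_eq_norm] using norm_sub_le M N

lemma frobNorm_mul_le (M : Matrix l m ℝ) (N : Matrix m n ℝ) :
    frobNorm (M * N) ≤ frobNorm M * frobNorm N := by
  simpa only [frobNorm_eq_norm] using frobenius_norm_mul M N

end MathlibNorm

lemma frobNorm_mul_left_of_transpose_mul_self [DecidableEq m] {A : Matrix l m ℝ} {c : ℝ}
    (hA : Aᵀ * A = c • 1) (M : Matrix m n ℝ) : frobNorm (A * M) = √c * frobNorm M := by
  have gram_eq : (A * M)ᵀ * (A * M) = c • (Mᵀ * M) := by
    rw [transpose_mul, Matrix.mul_assoc, ← Matrix.mul_assoc Aᵀ, hA, Matrix.smul_mul,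
      Matrix.one_mul, Matrix.mul_smul]
  rw [frobNorm, gram_eq, trace_smul, smul_eq_mul]
  exact Real.sqrt_mul' c (frobInner_self_nonneg M)

lemma frobNorm_mul_right_of_mul_transpose_self [DecidableEq m] {A : Matrix m l ℝ} {c : ℝ}
    (hA : A * Aᵀ = c • 1) (M : Matrix n m ℝ) : frobNorm (M * A) = √c * frobNorm M := by
  rw [← frobNorm_transpose, transpose_mul, frobNorm_mul_left_of_transpose_mul_self (c := c),
    frobNorm_transpose]
  rwa [transpose_transpose]

lemma frobNorm_mul_diagonal_mul_transpose_le [DecidableEq n] {U : Matrix m n ℝ} (hU : Uᵀ * U = 1)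
    {a : n → ℝ} {c : ℝ} (hc : 0 ≤ c) (ha : ∀ i, |a i| ≤ c) :
    frobNorm (U * diagonal a * Uᵀ) ≤ √(Fintype.card n) * c := by
  have norm_eq : frobNorm (U * diagonal a * Uᵀ) = frobNorm (diagonal a) := by
    rw [frobNorm_mul_right_of_mul_transpose_self (c := 1) (by simpa using hU),
      frobNorm_mul_left_of_transpose_mul_self (c := 1) (by simpa using hU)]
    simp
  exact norm_eq ▸ frobNorm_diagonal_le hc ha

end Frobenius

section OrthonormalColumns

variable {R m n ι κ : Type*} [CommSemiring R]

lemma transpose_mul_eq_zero_symm [Fintype m] {A : Matrix m ι R} {B : Matrix m κ R}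
    (h : Aᵀ * B = 0) : Bᵀ * A = 0 := by
  simpa using congrArg transpose h

lemma card_add_card_le_of_orthonormal_columns [StrongRankCondition R] [Fintype m] [Fintype ι]
    [DecidableEq ι] [Fintype κ] [DecidableEq κ] {U : Matrix m ι R} {U' : Matrix m κ R}
    (hU : Uᵀ * U = 1) (hU' : U'ᵀ * U' = 1) (hUU' : Uᵀ * U' = 0) :
    Fintype.card ι + Fintype.card κ ≤ Fintype.card m := by
  have gram_eq : (fromCols U U')ᵀ * fromCols U U' = 1 := by
    rw [transpose_fromCols, fromRows_mul_fromCols, hU, hU', hUU', transpose_mul_eq_zero_symm hUU',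
      fromBlocks_one]
  calc Fintype.card ι + Fintype.card κ = ((fromCols U U')ᵀ * fromCols U U').rank := by
        rw [gram_eq, rank_one, Fintype.card_sum]
    _ ≤ (fromCols U U').rank := rank_mul_le_right _ _
    _ ≤ Fintype.card m := rank_le_card_height _

lemma exists_mul_transpose_self_eq_one [Fintype ι] [DecidableEq ι] [Fintype κ]
    (h : Fintype.card ι ≤ Fintype.card κ) : ∃ J : Matrix ι κ R, J * Jᵀ = 1 := by
  classical
  obtain ⟨f⟩ := Function.Embedding.nonempty_of_card_le h
  refine ⟨(1 : Matrix κ κ R).submatrix f id, ?_⟩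
  rw [transpose_submatrix, transpose_one, ← submatrix_mul _ _ _ _ _ Function.bijective_id,
    Matrix.one_mul, submatrix_one f f.injective]

variable [Fintype ι] [Fintype κ]

lemma mul_transpose_add_mul_mul_left [Fintype n] [DecidableEq ι] {V : Matrix n ι R}
    {V' : Matrix n κ R} (hV : Vᵀ * V = 1) (hVV' : Vᵀ * V' = 0) (A : Matrix m ι R)
    (B : Matrix m κ R) : (A * Vᵀ + B * V'ᵀ) * V = A := by
  rw [Matrix.add_mul, Matrix.mul_assoc, hV, Matrix.mul_assoc, transpose_mul_eq_zero_symm hVV',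
    Matrix.mul_one, Matrix.mul_zero, add_zero]

lemma mul_transpose_add_mul_mul_transpose_self [Fintype n] [DecidableEq ι] [DecidableEq κ]
    {V : Matrix n ι R} {V' : Matrix n κ R} (hV : Vᵀ * V = 1) (hV' : V'ᵀ * V' = 1)
    (hVV' : Vᵀ * V' = 0) (A : Matrix m ι R) (B : Matrix m κ R) :
    (A * Vᵀ + B * V'ᵀ) * (A * Vᵀ + B * V'ᵀ)ᵀ = A * Aᵀ + B * Bᵀ := by
  have mul_right : (A * Vᵀ + B * V'ᵀ) * V' = B := by
    rw [add_comm, mul_transpose_add_mul_mul_left hV' (transpose_mul_eq_zero_symm hVV')]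
  rw [transpose_add, transpose_mul, transpose_mul, transpose_transpose, transpose_transpose,
    Matrix.mul_add, ← Matrix.mul_assoc, ← Matrix.mul_assoc, mul_right,
    mul_transpose_add_mul_mul_left hV hVV']

lemma mul_diagonal_mul_transpose_mul_diagonal [DecidableEq ι] (U : Matrix m ι R) (a b : ι → R) :
    U * diagonal a * (U * diagonal b)ᵀ = U * diagonal (a * b) * Uᵀ := by
  rw [transpose_mul, diagonal_transpose, Matrix.mul_assoc, ← Matrix.mul_assoc (diagonal a),
    diagonal_mul_diagonal', ← Matrix.mul_assoc]
  rfl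

lemma add_mul_mul_transpose_self [Fintype m] {E : Matrix m m R} (hE : E.IsSymm)
    (Y Z : Matrix m ι R) :
    (Y + E * Z) * (Y + E * Z)ᵀ
      = Y * Yᵀ + Y * Zᵀ * E + E * (Z * Yᵀ) + E * (Z * Zᵀ) * E := by
  simp only [transpose_add, transpose_mul, hE.eq, Matrix.add_mul, Matrix.mul_add, Matrix.mul_assoc]
  abel

end OrthonormalColumns

section HalfReflection

variable {n ι : Type*} [DecidableEq n] [Fintype ι]

/-- The matrix `Q = U Uᵀ - ½ I` of the theorem. When `U` has orthonormal columns it is half the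
reflection that fixes the column space of `U` and negates its orthogonal complement. -/
noncomputable def halfReflection (U : Matrix n ι ℝ) : Matrix n n ℝ :=
  U * Uᵀ - (1 / 2 : ℝ) • (1 : Matrix n n ℝ)

lemma halfReflection_isSymm (U : Matrix n ι ℝ) : (halfReflection U).IsSymm := by
  simp [halfReflection, IsSymm]

variable [Fintype n]

lemma halfReflection_mul_self [DecidableEq ι] {U : Matrix n ι ℝ} (hU : Uᵀ * U = 1) :
    halfReflection U * halfReflection U = (1 / 4 : ℝ) • 1 := by
  have proj_idem : U * Uᵀ * (U * Uᵀ) = U * Uᵀ := by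
    rw [Matrix.mul_assoc, ← Matrix.mul_assoc Uᵀ, hU, Matrix.one_mul]
  simp only [halfReflection, Matrix.sub_mul, Matrix.mul_sub, proj_idem, Matrix.smul_mul,
    Matrix.mul_smul, Matrix.one_mul, Matrix.mul_one]
  module

lemma mul_halfReflection_add_halfReflection_mul (E : Matrix n n ℝ) (U : Matrix n ι ℝ) :
    E * halfReflection U + halfReflection U * E = E * (U * Uᵀ) + U * Uᵀ * E - E := by
  simp only [halfReflection, Matrix.sub_mul, Matrix.mul_sub, Matrix.smul_mul, Matrix.mul_smul,
    Matrix.one_mul, Matrix.mul_one]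
  module

/-- The quantity `δ = 1 - √((1 + s) / 2)` of the theorem, where `s` is the cosine of the angle
between `E Q` and `Q E` whenever these have the same nonzero norm. It measures how far `E` and `Q`
are from commuting. -/
noncomputable def commutationGap (E Q : Matrix n n ℝ) : ℝ :=
  1 - √((1 + frobInner (E * Q) (Q * E) / frobNorm (E * Q) ^ 2) / 2)

lemma frobNorm_mul_halfReflection_add [DecidableEq ι] {U : Matrix n ι ℝ} (hU : Uᵀ * U = 1)
    {E : Matrix n n ℝ} (hE : 0 < frobNorm E) :
    frobNorm (E * halfReflection U + halfReflection U * E)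
      = (1 - commutationGap E (halfReflection U)) * frobNorm E := by
  set Q := halfReflection U
  have sqrt_quarter : √(1 / 4 : ℝ) = 1 / 2 := by
    rw [show (1 / 4 : ℝ) = (1 / 2) ^ 2 by norm_num, Real.sqrt_sq (by norm_num)]
  have hQsymm : Qᵀ = Q := halfReflection_isSymm U
  have hEQ : frobNorm (E * Q) = 1 / 2 * frobNorm E := by
    rw [← sqrt_quarter]
    exact frobNorm_mul_right_of_mul_transpose_self (by rw [hQsymm, halfReflection_mul_self hU]) E
  have hQE : frobNorm (Q * E) = 1 / 2 * frobNorm E := by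
    rw [← sqrt_quarter]
    exact frobNorm_mul_left_of_transpose_mul_self (by rw [hQsymm, halfReflection_mul_self hU]) E
  rw [frobNorm_add_of_frobNorm_eq (by rw [hEQ]; positivity) (hEQ.trans hQE.symm), commutationGap,
    hEQ]
  ring

end HalfReflection

section Reconstruction

variable {n d k ι κ : Type*} [Fintype n] [Fintype d] [Fintype k]
  [Fintype ι] [DecidableEq ι] [Fintype κ] [DecidableEq κ]

lemma propagation_mul_weight_eq {X : Matrix n d ℝ} {U : Matrix n ι ℝ} {V : Matrix d ι ℝ}
    {σ : ι → ℝ} (hσ : ∀ i, σ i ≠ 0) (hXV : X * V = U * diagonal σ)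
    (hXXU : X * Xᵀ * U = U * diagonal (σ ^ 2)) (E : Matrix n n ℝ) :
    (X * Xᵀ + E) * X * (V * diagonal (σ⁻¹ ^ 2))
      = U * diagonal σ + E * (U * diagonal σ⁻¹) := by
  have diag_mul_inv_sq : diagonal σ * diagonal (σ⁻¹ ^ 2) = diagonal σ⁻¹ := by
    rw [diagonal_mul_diagonal, diagonal_eq_diagonal_iff]
    intro i
    have := hσ i
    simp only [Pi.pow_apply, Pi.inv_apply]
    field_simp
  have diag_sq_mul_inv : diagonal (σ ^ 2) * diagonal σ⁻¹ = diagonal σ := by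
    rw [diagonal_mul_diagonal, diagonal_eq_diagonal_iff]
    intro i
    have := hσ i
    simp only [Pi.pow_apply, Pi.inv_apply]
    field_simp
  have XV_mul : X * (V * diagonal (σ⁻¹ ^ 2)) = U * diagonal σ⁻¹ := by
    rw [← Matrix.mul_assoc, hXV, Matrix.mul_assoc, diag_mul_inv_sq]
  rw [Matrix.mul_assoc, XV_mul, Matrix.add_mul, ← Matrix.mul_assoc (X * Xᵀ), hXXU,
    Matrix.mul_assoc U, diag_sq_mul_inv]

lemma frobNorm_leading_correction_le {U : Matrix n ι ℝ} (hU : Uᵀ * U = 1) {σ : ι → ℝ} {σmin : ℝ}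
    (hσmin : 0 < σmin) (hσ : ∀ i, σmin ≤ σ i) (E : Matrix n n ℝ) :
    frobNorm (E * (U * diagonal (σ⁻¹ ^ 2) * Uᵀ) * E)
      ≤ √(Fintype.card ι) * frobNorm E / σmin ^ 2 * frobNorm E := by
  have inv_sq_le (i : ι) : |(σ⁻¹ ^ 2) i| ≤ (σmin ^ 2)⁻¹ := by
    rw [Pi.pow_apply, Pi.inv_apply, inv_pow, abs_of_nonneg (by positivity)]
    gcongr
    exact hσ i
  have core_le := frobNorm_mul_diagonal_mul_transpose_le hU (by positivity) inv_sq_le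
  have normE_nonneg : 0 ≤ frobNorm E := frobNorm_nonneg E
  calc frobNorm (E * (U * diagonal (σ⁻¹ ^ 2) * Uᵀ) * E)
      ≤ frobNorm (E * (U * diagonal (σ⁻¹ ^ 2) * Uᵀ)) * frobNorm E := frobNorm_mul_le _ _
    _ ≤ frobNorm E * frobNorm (U * diagonal (σ⁻¹ ^ 2) * Uᵀ) * frobNorm E := by
        gcongr
        exact frobNorm_mul_le _ _
    _ ≤ frobNorm E * (√(Fintype.card ι) * (σmin ^ 2)⁻¹) * frobNorm E := by gcongr
    _ = √(Fintype.card ι) * frobNorm E / σmin ^ 2 * frobNorm E := by ring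

lemma frobNorm_tail_le {U : Matrix n ι ℝ} {U' : Matrix n κ ℝ} (hU : Uᵀ * U = 1)
    (hU' : U'ᵀ * U' = 1) (hUU' : Uᵀ * U' = 0) {τ : κ → ℝ} {τmax : ℝ} (hτ : ∀ j, |τ j| ≤ τmax) :
    frobNorm (U' * diagonal (τ ^ 2) * U'ᵀ)
      ≤ √(Fintype.card n - Fintype.card ι : ℕ) * τmax ^ 2 := by
  have sq_le (j : κ) : |(τ ^ 2) j| ≤ τmax ^ 2 := by
    rw [Pi.pow_apply, abs_pow]
    gcongr
    exact hτ j
  have card_le : Fintype.card κ ≤ Fintype.card n - Fintype.card ι :=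
    Nat.le_sub_of_add_le' (card_add_card_le_of_orthonormal_columns hU hU' hUU')
  calc frobNorm (U' * diagonal (τ ^ 2) * U'ᵀ) ≤ √(Fintype.card κ) * τmax ^ 2 :=
        frobNorm_mul_diagonal_mul_transpose_le hU' (sq_nonneg _) sq_le
    _ ≤ √(Fintype.card n - Fintype.card ι : ℕ) * τmax ^ 2 := by gcongr

variable [DecidableEq n]

lemma reconstruction_residual_eq {X : Matrix n d ℝ} {U : Matrix n ι ℝ} {V : Matrix d ι ℝ}
    {T E : Matrix n n ℝ} {σ : ι → ℝ} (hσ : ∀ i, σ i ≠ 0) (hXV : X * V = U * diagonal σ)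
    (hXXU : X * Xᵀ * U = U * diagonal (σ ^ 2))
    (hXX : X * Xᵀ = U * diagonal (σ ^ 2) * Uᵀ + T) (hE : E.IsSymm) :
    X * Xᵀ + E - (X * Xᵀ + E) * X * (V * diagonal (σ⁻¹ ^ 2))
        * ((X * Xᵀ + E) * X * (V * diagonal (σ⁻¹ ^ 2)))ᵀ
      = T - (E * halfReflection U + halfReflection U * E)
        - E * (U * diagonal (σ⁻¹ ^ 2) * Uᵀ) * E := by
  have mul_inv_eq_one : σ * σ⁻¹ = fun _ => 1 := funext fun i => mul_inv_cancel₀ (hσ i)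
  rw [propagation_mul_weight_eq hσ hXV hXXU E, add_mul_mul_transpose_self hE]
  simp only [mul_diagonal_mul_transpose_mul_diagonal, mul_comm σ⁻¹ σ, mul_inv_eq_one, ← sq,
    diagonal_one, Matrix.mul_one, mul_halfReflection_add_halfReflection_mul]
  rw [hXX]
  abel

lemma exists_weight_residual_eq {P : Matrix n n ℝ} (hP : P.IsSymm) {X : Matrix n d ℝ}
    {Uo : Matrix n ι ℝ} {Ue : Matrix n κ ℝ} {Vo : Matrix d ι ℝ} {Ve : Matrix d κ ℝ}
    {so : ι → ℝ} {se : κ → ℝ} (hUo : Uoᵀ * Uo = 1) (hUoUe : Uoᵀ * Ue = 0)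
    (hVo : Voᵀ * Vo = 1) (hVe : Veᵀ * Ve = 1) (hVoVe : Voᵀ * Ve = 0)
    (hX : X = Uo * diagonal so * Voᵀ + Ue * diagonal se * Veᵀ) (hso : ∀ i, so i ≠ 0)
    (hcard : Fintype.card ι ≤ Fintype.card k) :
    ∃ W : Matrix d k ℝ, P - P * X * W * (P * X * W)ᵀ
      = Ue * diagonal (se ^ 2) * Ueᵀ
        - ((P - X * Xᵀ) * halfReflection Uo + halfReflection Uo * (P - X * Xᵀ))
        - (P - X * Xᵀ) * (Uo * diagonal (so⁻¹ ^ 2) * Uoᵀ) * (P - X * Xᵀ) := by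
  obtain ⟨J, hJ⟩ := exists_mul_transpose_self_eq_one (R := ℝ) hcard
  have hXVo : X * Vo = Uo * diagonal so := hX ▸ mul_transpose_add_mul_mul_left hVo hVoVe _ _
  have hXX : X * Xᵀ = Uo * diagonal (so ^ 2) * Uoᵀ + Ue * diagonal (se ^ 2) * Ueᵀ := by
    rw [hX, mul_transpose_add_mul_mul_transpose_self hVo hVe hVoVe]
    simp only [mul_diagonal_mul_transpose_mul_diagonal, ← sq]
  have hXXUo : X * Xᵀ * Uo = Uo * diagonal (so ^ 2) := by
    rw [hXX, mul_transpose_add_mul_mul_left hUo hUoUe]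
  have hE : (P - X * Xᵀ).IsSymm := by simp [IsSymm, hP.eq]
  have residual := reconstruction_residual_eq hso hXVo hXXUo hXX hE
  refine ⟨Vo * diagonal (so⁻¹ ^ 2) * J, ?_⟩
  rw [add_sub_cancel] at residual
  rw [← residual, ← Matrix.mul_assoc (P * X), transpose_mul _ J, Matrix.mul_assoc,
    ← Matrix.mul_assoc J, hJ, Matrix.one_mul]

theorem sgnn_theorem_1_general (P : Matrix n n ℝ) (hP : P.IsSymm) (X : Matrix n d ℝ)
    (Uo : Matrix n ι ℝ) (Ue : Matrix n κ ℝ) (Vo : Matrix d ι ℝ) (Ve : Matrix d κ ℝ)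
    (so : ι → ℝ) (se : κ → ℝ)
    (hUo : Uoᵀ * Uo = 1) (hUe : Ueᵀ * Ue = 1) (hUoUe : Uoᵀ * Ue = 0)
    (hVo : Voᵀ * Vo = 1) (hVe : Veᵀ * Ve = 1) (hVoVe : Voᵀ * Ve = 0)
    (hX : X = Uo * diagonal so * Voᵀ + Ue * diagonal se * Veᵀ)
    (hso : ∀ i, 0 < so i) (hse : ∀ j, 0 ≤ se j) (hcard : Fintype.card ι ≤ Fintype.card k)
    (σo σstar : ℝ) (hσo : IsLeast (Set.range so) σo)
    (hσstar : IsGreatest (insert 0 (Set.range se)) σstar)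
    (hε : 0 < frobNorm (P - X * Xᵀ))
    (hleading : √(Fintype.card ι) * frobNorm (P - X * Xᵀ) / σo ^ 2
      ≤ commutationGap (P - X * Xᵀ) (halfReflection Uo) / 2)
    (htail : √(Fintype.card n - Fintype.card ι : ℕ) * σstar ^ 2
      ≤ commutationGap (P - X * Xᵀ) (halfReflection Uo) * frobNorm (P - X * Xᵀ) / 2) :
    ∃ W : Matrix d k ℝ,
      frobNorm (P - (P * X * W) * (P * X * W)ᵀ) ≤ frobNorm (P - X * Xᵀ) := by
  obtain ⟨W, hW⟩ := exists_weight_residual_eq hP hUo hUoUe hVo hVe hVoVe hX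
    (fun i => (hso i).ne') hcard
  refine ⟨W, hW ▸ ?_⟩
  set E := P - X * Xᵀ
  set Q := halfReflection Uo
  set T := Ue * diagonal (se ^ 2) * Ueᵀ
  set G := Uo * diagonal (so⁻¹ ^ 2) * Uoᵀ
  have hσo_pos : 0 < σo := by
    obtain ⟨i, rfl⟩ := hσo.1
    exact hso i
  have hse_le (j : κ) : |se j| ≤ σstar :=
    (abs_of_nonneg (hse j)).trans_le (hσstar.2 (Set.mem_insert_of_mem _ ⟨j, rfl⟩))
  have tail_le : frobNorm T ≤ commutationGap E Q * frobNorm E / 2 :=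
    (frobNorm_tail_le hUo hUe hUoUe hse_le).trans htail
  have anticommutator_eq : frobNorm (E * Q + Q * E) = (1 - commutationGap E Q) * frobNorm E :=
    frobNorm_mul_halfReflection_add hUo hε
  have correction_le : frobNorm (E * G * E) ≤ commutationGap E Q / 2 * frobNorm E :=
    (frobNorm_leading_correction_le hUo hσo_pos (fun i => hσo.2 ⟨i, rfl⟩) E).trans (by gcongr)
  calc frobNorm (T - (E * Q + Q * E) - E * G * E)
      ≤ frobNorm T + frobNorm (E * Q + Q * E) + frobNorm (E * G * E) := by
        linarith [frobNorm_sub_le (T - (E * Q + Q * E)) (E * G * E),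
          frobNorm_sub_le T (E * Q + Q * E)]
    _ ≤ frobNorm E := by linarith

end Reconstruction

/-- Theorem 1: if ε = ‖P − X Xᵀ‖_F > 0, E Q ≠ Q E (Assumption 1),
√o·ε/σₒ² ≤ δ/2 and √(n−o)·σ*² ≤ δε/2, then there exists W such that
H = P X W satisfies ‖P − H Hᵀ‖_F ≤ ε.
Here X = Uₒ Σₒ Vₒᵀ + Uₑ Σₑ Vₑᵀ is the SVD of X split into the o leading
singular triples (o = min(rank X, k)) and the rest, σₒ is the o-th largest
singular value and σ* the (o+1)-th largest singular value of X. -/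
theorem sgnn_theorem_1
    {n d k o e : ℕ}
    (P : Matrix (Fin n) (Fin n) ℝ) (hP : Pᵀ = P)
    (X : Matrix (Fin n) (Fin d) ℝ)
    (Uo : Matrix (Fin n) (Fin o) ℝ) (Ue : Matrix (Fin n) (Fin e) ℝ)
    (Vo : Matrix (Fin d) (Fin o) ℝ) (Ve : Matrix (Fin d) (Fin e) ℝ)
    (so : Fin o → ℝ) (se : Fin e → ℝ)
    (hUo : Uoᵀ * Uo = 1) (hUe : Ueᵀ * Ue = 1) (hUoUe : Uoᵀ * Ue = 0)
    (hVo : Voᵀ * Vo = 1) (hVe : Veᵀ * Ve = 1) (hVoVe : Voᵀ * Ve = 0)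
    (hX : X = Uo * Matrix.diagonal so * Voᵀ + Ue * Matrix.diagonal se * Veᵀ)
    (hso : ∀ i, 0 < so i) (hse : ∀ i, 0 ≤ se i)
    (horder : ∀ i j, se j ≤ so i)
    (ho : o = min X.rank k)
    (σo σstar : ℝ)
    (hσo : IsLeast (Set.range so) σo)
    (hσstar : IsGreatest (insert 0 (Set.range se)) σstar) :
    let E : Matrix (Fin n) (Fin n) ℝ := P - X * Xᵀ
    let ε : ℝ := frobNorm E
    let Q : Matrix (Fin n) (Fin n) ℝ :=
      Uo * Uoᵀ - (1/2 : ℝ) • (1 : Matrix (Fin n) (Fin n) ℝ)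
    let s : ℝ := frobInner (E * Q) (Q * E) / (frobNorm (E * Q)) ^ 2
    let δ : ℝ := 1 - Real.sqrt ((1 + s) / 2)
    0 < ε →
    E * Q ≠ Q * E →
    Real.sqrt o * ε / σo ^ 2 ≤ δ / 2 →
    Real.sqrt (n - o : ℕ) * σstar ^ 2 ≤ δ * ε / 2 →
    ∃ W : Matrix (Fin d) (Fin k) ℝ,
      frobNorm (P - (P * X * W) * (P * X * W)ᵀ) ≤ ε := by
  intro E ε Q s δ hε _ hleading htail
  exact sgnn_theorem_1_general P hP X Uo Ue Vo Ve so se hUo hUe hUoUe hVo hVe hVoVe hX hso hse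
    (by simp [ho]) σo σstar hσo hσstar hε
    (by rwa [Fintype.card_fin]) (by rwa [Fintype.card_fin, Fintype.card_fin])
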